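/- arXiv:1802.07403 — 3 statements merged into one kernel-verified Lean document; each statement's English description precedes it below -/
import Mathlib

section
/- Write c₁ = e·H + ε and D = d·H + δ with e = B(H,c₁)/B(H,H) and d = B(H,D)/B(H,H), so that B(H,ε) = B(H,δ) = 0. Then B(H,H)·Δ_{H,D} − Δ = −B(r·δ − ε, r·δ − ε)/(2r²). -/
/-- With c₁ = e·H + ε and D = d·H + δ, where e = B(H,c₁)/B(H,H) and
d = B(H,D)/B(H,H) (so B(H,ε) = B(H,δ) = 0), one has
B(H,H)·Δ_{H,D} − Δ = −B(r·δ − ε, r·δ − ε)/(2r²). -/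
theorem stmt_0 (V : Type*) [AddCommGroup V] [Module ℝ V]
    (B : V →ₗ[ℝ] V →ₗ[ℝ] ℝ) (hsymm : ∀ v w : V, B v w = B w v)
    (H : V) (hH : B H H ≠ 0)
    (r : ℝ) (hr : r ≠ 0) (c₁ : V) (c₂ : ℝ) (D : V)
    (e d : ℝ) (ε δ : V)
    (he : e = B H c₁ / B H H) (hd : d = B H D / B H H)
    (hc₁ : c₁ = e • H + ε) (hD : D = d • H + δ)
    (hε : B H ε = 0) (hδ : B H δ = 0) :
    B H H * ((1/2) * (B H (c₁ - r • D) / (r * B H H))^2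
        - (c₂ - B D c₁ + (r/2) * B D D) / (r * B H H))
      - (B c₁ c₁ / (2 * r^2) - c₂ / r)
    = - B (r • δ - ε) (r • δ - ε) / (2 * r^2) := by
  clear he hd
  subst hc₁ hD
  have h1 : B ε H = 0 := by rw [hsymm, hε]
  have h2 : B δ H = 0 := by rw [hsymm, hδ]
  have h3 : B δ ε = B ε δ := hsymm δ ε
  simp only [map_add, map_sub, map_smul, LinearMap.add_apply, LinearMap.sub_apply,
    LinearMap.smul_apply, smul_eq_mul, hε, hδ, h1, h2, h3]
  field_simp
  ring
end

section
/- Assume in addition that B(H,H) > 0 and that B is negative semidefinite on the orthogonal complement of H, i.e. B(v,v) ≤ 0 whenever B(H,v) = 0 (the Hodge index property). Then for every D ∈ V one has B(H,H)·Δ_{H,D} ≥ Δ, and there exists D ∈ V (for instance any D whose H-orthogonal component equals ε/r, where c₁ = e·H + ε with B(H,ε) = 0) for which B(H,H)·Δ_{H,D} = Δ. -/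
/-- If B(H,H) > 0 and B is negative semidefinite on H-perp (Hodge index
property), then B(H,H)·Δ_{H,D} ≥ Δ for every D, and equality holds for some D. -/
theorem stmt_1 (V : Type*) [AddCommGroup V] [Module ℝ V]
    (B : V →ₗ[ℝ] V →ₗ[ℝ] ℝ) (hsymm : ∀ v w : V, B v w = B w v)
    (H : V) (hHpos : B H H > 0)
    (hodge : ∀ v : V, B H v = 0 → B v v ≤ 0)
    (r : ℝ) (hr : r ≠ 0) (c₁ : V) (c₂ : ℝ) :
    (∀ D : V,
      B H H * ((1/2) * (B H (c₁ - r • D) / (r * B H H))^2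
          - (c₂ - B D c₁ + (r/2) * B D D) / (r * B H H))
        ≥ B c₁ c₁ / (2 * r^2) - c₂ / r) ∧
    (∃ D : V,
      B H H * ((1/2) * (B H (c₁ - r • D) / (r * B H H))^2
          - (c₂ - B D c₁ + (r/2) * B D D) / (r * B H H))
        = B c₁ c₁ / (2 * r^2) - c₂ / r) := by
  have hne : B H H ≠ 0 := hHpos.ne'
  constructor
  · intro D
    have h0 := hodge ((c₁ - r • D) - (B H (c₁ - r • D) / B H H) • H) (by
      rw [map_sub, map_smul, smul_eq_mul, div_mul_cancel₀ _ hne, sub_self])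
    have key : B H H * ((1/2) * (B H (c₁ - r • D) / (r * B H H))^2
          - (c₂ - B D c₁ + (r/2) * B D D) / (r * B H H))
        = B c₁ c₁ / (2 * r^2) - c₂ / r
          - B ((c₁ - r • D) - (B H (c₁ - r • D) / B H H) • H)
              ((c₁ - r • D) - (B H (c₁ - r • D) / B H H) • H) / (2 * r^2) := by
      simp only [map_sub, map_smul, LinearMap.sub_apply, LinearMap.smul_apply, smul_eq_mul]
      rw [hsymm c₁ H, hsymm D H, hsymm c₁ D]
      field_simp
      ring
    rw [key]
    have h1 := div_nonpos_of_nonpos_of_nonneg h0 (by positivity : (0:ℝ) ≤ 2 * r^2)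
    linarith
  · refine ⟨r⁻¹ • c₁, ?_⟩
    simp only [map_sub, map_smul, LinearMap.smul_apply, smul_eq_mul]
    field_simp
    ring
end

section
/- Let Δ ≥ 0, 0 ≤ Δ_α ≤ 1/2 and μ, α ∈ ℝ with μ₀ − 2x_α ≤ α ≤ μ₀ + 2x_α. If α + μ < 0, then Δ < (3/2)(8 − 3√5). -/
/-- with Δ ≥ 0, 0 ≤ Δ_α ≤ 1/2, μ₀ = (−3 + √(5+8Δ))/2 − μ,
x_α = (3 − √(5+8Δ_α))/2 and μ₀ − 2x_α ≤ α ≤ μ₀ + 2x_α, if α + μ < 0 then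
Δ < (3/2)(8 − 3√5). -/
theorem stmt_7 (Δ Δα μ α : ℝ) (hΔ : 0 ≤ Δ) (hΔα₀ : 0 ≤ Δα) (hΔα₁ : Δα ≤ 1/2)
    (h₁ : ((-3 + Real.sqrt (5 + 8 * Δ)) / 2 - μ)
        - 2 * ((3 - Real.sqrt (5 + 8 * Δα)) / 2) ≤ α)
    (h₂ : α ≤ ((-3 + Real.sqrt (5 + 8 * Δ)) / 2 - μ)
        + 2 * ((3 - Real.sqrt (5 + 8 * Δα)) / 2))
    (hneg : α + μ < 0) :
    Δ < (3/2) * (8 - 3 * Real.sqrt 5) := by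
  have h5 : Real.sqrt 5 ≤ Real.sqrt (5 + 8 * Δα) := Real.sqrt_le_sqrt (by linarith)
  have hs : Real.sqrt (5 + 8 * Δ) < 9 - 2 * Real.sqrt 5 := by linarith
  have hs0 := Real.sqrt_nonneg (5 + 8 * Δ)
  have hsq := Real.sq_sqrt (show (0:ℝ) ≤ 5 + 8 * Δ by linarith)
  have h5q := Real.sq_sqrt (show (0:ℝ) ≤ 5 by norm_num)
  have hlt := pow_lt_pow_left₀ hs hs0 (two_ne_zero)
  nlinarith
end
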